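/- In the mean field kernel setting: for every f ∈ H_k there exists a sequence f_M ∈ H_{k_M} (M ∈ ℕ₊) such that sup_{x ∈ X^M}|f_M(x) − f(μ̂[x])| → 0 and limsup_{M→∞} ‖f_M‖_{k_M} ≤ ‖f‖_k. -/

import Mathlib

open MeasureTheory Filter
open scoped ENNReal RealInnerProductSpace

/-- Kantorovich–Rubinstein metric: `d_KR(μ,ν) = sup{∫φ dμ − ∫φ dν : φ 1-Lipschitz}`. -/
noncomputable def dKR {X : Type*} [MeasurableSpace X] [MetricSpace X] (μ ν : Measure X) : ℝ :=
  ⨆ φ : {f : X → ℝ // LipschitzWith 1 f}, (∫ x, φ.1 x ∂μ - ∫ x, φ.1 x ∂ν)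

/-- The empirical measure `(1/M) ∑ᵢ δ_{xᵢ}` of a tuple `x ∈ X^M`. -/
noncomputable def empMeasure {X : Type*} [MeasurableSpace X] {M : ℕ} (x : Fin M → X) : Measure X :=
  ((M : ℝ≥0∞)⁻¹) • ∑ i, Measure.dirac (x i)

theorem empMeasure_prob {X : Type*} [MeasurableSpace X] {M : ℕ} (x : Fin (M + 1) → X) :
    IsProbabilityMeasure (empMeasure x) := by
  constructor
  simp only [empMeasure, Measure.smul_apply, smul_eq_mul]
  rw [Measure.coe_finset_sum]
  simp only [Finset.sum_apply, measure_univ, Finset.sum_const, Finset.card_univ,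
    Fintype.card_fin, nsmul_eq_mul, mul_one]
  exact ENNReal.inv_mul_cancel (by exact_mod_cast Nat.succ_ne_zero M) (by simp)

/-- The empirical measure of a (nonempty) tuple, as a probability measure. -/
noncomputable def empProb {X : Type*} [MeasurableSpace X] {M : ℕ} (x : Fin (M + 1) → X) :
    ProbabilityMeasure X :=
  ⟨empMeasure x, empMeasure_prob x⟩

open MeasureTheory Filter Topology

theorem aux_net {X : Type*} [MetricSpace X] [CompactSpace X] [Nonempty X]
    [MeasurableSpace X] [BorelSpace X] (ε : ℝ) (hε : 0 < ε) :
    ∃ s : SimpleFunc X X, ∀ x, dist (s x) x ≤ ε := by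
  let e := TopologicalSpace.denseSeq X
  have hcov : (Set.univ : Set X) ⊆ ⋃ i, Metric.ball (e i) ε := by
    intro x _
    obtain ⟨i, hi⟩ := (TopologicalSpace.denseRange_denseSeq X).exists_dist_lt x hε
    exact Set.mem_iUnion.2 ⟨i, hi⟩
  obtain ⟨t, ht⟩ := isCompact_univ.elim_finite_subcover _ (fun i => Metric.isOpen_ball) hcov
  refine ⟨SimpleFunc.nearestPt e (t.sup id), fun x => ?_⟩
  obtain ⟨i, hi, hx⟩ := Set.mem_iUnion₂.1 (ht (Set.mem_univ x))
  have h1 := SimpleFunc.edist_nearestPt_le e x (Finset.le_sup (f := id) hi)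
  simp only [id, edist_dist] at h1
  rw [ENNReal.ofReal_le_ofReal_iff dist_nonneg] at h1
  rw [Metric.mem_ball, dist_comm] at hx
  linarith

theorem aux_counts {ι : Type*} [Fintype ι] [Nonempty ι] (p : ι → ℝ) (hp : ∀ i, 0 ≤ p i)
    (hsum : ∑ i, p i = 1) (n : ℕ) :
    ∃ t : ι → ℕ, ∑ i, t i = n ∧ ∑ i, |(t i : ℝ) - n * p i| ≤ 2 * Fintype.card ι := by
  classical
  obtain ⟨i0⟩ := ‹Nonempty ι›
  have hle : ∑ i, ⌊n * p i⌋₊ ≤ n := by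
    have : ((∑ i, ⌊n * p i⌋₊ : ℕ) : ℝ) ≤ n := by
      push_cast
      calc ∑ i, ((⌊n * p i⌋₊ : ℕ) : ℝ) ≤ ∑ i, n * p i :=
            Finset.sum_le_sum fun i _ => Nat.floor_le (mul_nonneg (Nat.cast_nonneg _) (hp i))
        _ = n := by rw [← Finset.mul_sum, hsum, mul_one]
    exact_mod_cast this
  let t : ι → ℕ := fun i => ⌊n * p i⌋₊ + if i = i0 then n - ∑ i, ⌊n * p i⌋₊ else 0
  have ht : ∑ i, t i = n := by
    simp only [t, Finset.sum_add_distrib, Finset.sum_ite_eq', Finset.mem_univ, if_true]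
    omega
  refine ⟨t, ht, ?_⟩
  have hb : ∀ i, |(t i : ℝ) - n * p i| ≤ ((t i : ℝ) - n * p i) + 2 := by
    intro i
    have h1 : n * p i < ⌊n * p i⌋₊ + 1 := Nat.lt_floor_add_one _
    have h2 : ((⌊n * p i⌋₊ : ℕ) : ℝ) ≤ t i := by
      exact_mod_cast Nat.le_add_right _ _
    rw [abs_le]; constructor <;> linarith
  calc _ ≤ ∑ i, (((t i : ℝ) - n * p i) + 2) := Finset.sum_le_sum fun i _ => hb i
    _ = 2 * Fintype.card ι := by
      rw [Finset.sum_add_distrib, Finset.sum_sub_distrib, ← Finset.mul_sum, hsum]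
      have : ∑ i, (t i : ℝ) = n := by exact_mod_cast ht
      rw [this]; simp; ring

theorem aux_int_emp {X : Type*} [MetricSpace X] [MeasurableSpace X] [BorelSpace X]
    {M : ℕ} (x : Fin M → X) (φ : X → ℝ) (hφ : Continuous φ) :
    ∫ y, φ y ∂(empMeasure x) = (M : ℝ)⁻¹ * ∑ i, φ (x i) := by
  unfold empMeasure
  rw [integral_smul_measure, integral_finsetSum_measure]
  · simp [integral_dirac]
  · intro i _
    exact integrable_dirac (by simp)

theorem aux_dKR {X : Type*} [MetricSpace X] [CompactSpace X] [Nonempty X]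
    [MeasurableSpace X] [BorelSpace X] (μ : Measure X) [IsProbabilityMeasure μ]
    (ε : ℝ) (hε : 0 < ε) :
    ∃ M₀ : ℕ, ∀ M ≥ M₀, ∃ x : Fin (M + 1) → X, |dKR μ (empMeasure x)| ≤ ε := by
  classical
  obtain ⟨s, hs⟩ := aux_net (X := X) (ε / 2) (by positivity)
  let ι := {y // y ∈ s.range}
  let p : ι → ℝ := fun y => μ.real (s ⁻¹' {y.1})
  obtain ⟨x0⟩ := ‹Nonempty X›
  haveI : Nonempty ι := ⟨⟨s x0, SimpleFunc.mem_range_self s x0⟩⟩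
  have hint : ∀ φ : X → ℝ, ∫ x, φ (s x) ∂μ = ∑ i : ι, p i * φ i.1 := by
    intro φ
    have h0 : ∀ x, φ (s x) = ∑ i : ι, (s ⁻¹' {i.1}).indicator (fun _ => φ i.1) x := by
      intro x
      rw [Finset.sum_eq_single (⟨s x, SimpleFunc.mem_range_self s x⟩ : ι)]
      · simp
      · intro b _ hb
        apply Set.indicator_of_notMem
        intro h
        exact hb (Subtype.ext (by simpa using h.symm))
      · simp
    simp_rw [h0]
    rw [integral_finsetSum]
    · refine Finset.sum_congr rfl fun i _ => ?_
      rw [integral_indicator_const _ (s.measurableSet_preimage _)]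
      rfl
    · intro i _
      exact (integrable_const _).indicator (s.measurableSet_preimage _)
  have hsum : ∑ i, p i = 1 := by
    have := hint (fun _ => 1)
    simpa using this.symm
  let D := Metric.diam (Set.univ : Set X)
  have hD : ∀ x y : X, dist x y ≤ D := fun x y =>
    Metric.dist_le_diam_of_mem isCompact_univ.isBounded (Set.mem_univ _) (Set.mem_univ _)
  obtain ⟨M₀, hM₀⟩ := exists_nat_ge (D * (2 * Fintype.card ι) / (ε / 2))
  refine ⟨M₀, fun M hM => ?_⟩
  obtain ⟨t, ht, htb⟩ := aux_counts p (fun _ => measureReal_nonneg) hsum (M + 1)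
  have hcard : Fintype.card (Fin (M + 1)) = Fintype.card (Σ i : ι, Fin (t i)) := by
    simp [ht]
  let E := Fintype.equivOfCardEq hcard
  let x : Fin (M + 1) → X := fun m => (E m).1.1
  have hxs : ∀ φ : X → ℝ, ∑ m, φ (x m) = ∑ i : ι, (t i : ℝ) * φ i.1 := by
    intro φ
    rw [E.sum_comp (fun q : Σ i : ι, Fin (t i) => φ q.1.1), Fintype.sum_sigma]
    simp
  refine ⟨x, ?_⟩
  have key : ∀ φ : {f : X → ℝ // LipschitzWith 1 f},
      (∫ y, φ.1 y ∂μ - ∫ y, φ.1 y ∂(empMeasure x)) ≤ ε := by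
    rintro ⟨φ, hφ⟩
    have hd : ∀ a b, |φ a - φ b| ≤ dist a b := by
      intro a b
      simpa [Real.dist_eq] using hφ.dist_le_mul a b
    have hφi : Integrable φ μ :=
      hφ.continuous.integrable_of_hasCompactSupport (HasCompactSupport.of_compactSpace φ)
    have hφs : Integrable (fun y => φ (s y)) μ :=
      SimpleFunc.integrable_of_isFiniteMeasure (s.map φ)
    have h1 : |∫ y, φ y ∂μ - ∫ y, φ (s y) ∂μ| ≤ ε / 2 := by
      rw [← integral_sub hφi hφs]
      have := norm_integral_le_of_norm_le_const (μ := μ) (f := fun y => φ y - φ (s y))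
        (C := ε / 2) (Eventually.of_forall fun y => by
          rw [Real.norm_eq_abs, abs_sub_comm]
          exact (hd _ _).trans (hs y))
      simpa using this
    have hM1 : (0 : ℝ) < (M : ℝ) + 1 := by positivity
    have h2 : |∫ y, φ (s y) ∂μ - ∫ y, φ y ∂(empMeasure x)| ≤ ε / 2 := by
      rw [aux_int_emp x φ hφ.continuous, hint, hxs]
      have ht' : ∑ i, (t i : ℝ) = M + 1 := by exact_mod_cast ht
      have e1 : ((M : ℝ) + 1) * (∑ i : ι, p i * φ i.1
          - ((M + 1 : ℕ) : ℝ)⁻¹ * ∑ i : ι, (t i : ℝ) * φ i.1)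
          = - ∑ i : ι, ((t i : ℝ) - (M + 1 : ℕ) * p i) * (φ i.1 - φ x0) := by
        have a1 : ∑ i : ι, ((t i : ℝ) - (M + 1 : ℕ) * p i) * (φ i.1 - φ x0)
            = ∑ i : ι, (t i : ℝ) * φ i.1 - (M + 1) * ∑ i : ι, p i * φ i.1
              - (∑ i, (t i : ℝ) - (M + 1) * ∑ i, p i) * φ x0 := by
          rw [Finset.mul_sum, Finset.mul_sum, ← Finset.sum_sub_distrib,
            ← Finset.sum_sub_distrib, Finset.sum_mul, ← Finset.sum_sub_distrib]
          refine Finset.sum_congr rfl fun i _ => ?_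
          push_cast; ring
        rw [a1, ht', hsum]
        push_cast
        field_simp
        ring
      have e2 : ((M : ℝ) + 1) * |∑ i : ι, p i * φ i.1
          - ((M + 1 : ℕ) : ℝ)⁻¹ * ∑ i : ι, (t i : ℝ) * φ i.1| ≤ D * (2 * Fintype.card ι) := by
        rw [← abs_of_pos hM1, ← abs_mul, e1, abs_neg]
        calc _ ≤ ∑ i : ι, |((t i : ℝ) - (M + 1 : ℕ) * p i) * (φ i.1 - φ x0)| :=
              Finset.abs_sum_le_sum_abs _ _
          _ ≤ ∑ i : ι, D * |(t i : ℝ) - (M + 1 : ℕ) * p i| := by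
              refine Finset.sum_le_sum fun i _ => ?_
              rw [abs_mul, mul_comm]
              exact mul_le_mul_of_nonneg_right ((hd _ _).trans (hD _ _)) (abs_nonneg _)
          _ ≤ _ := by
              rw [← Finset.mul_sum]
              exact mul_le_mul_of_nonneg_left htb Metric.diam_nonneg
      rw [div_le_iff₀ (by positivity)] at hM₀
      have hMM : (M₀ : ℝ) ≤ M := by exact_mod_cast hM
      have : (M₀ : ℝ) * (ε / 2) ≤ (M + 1) * (ε / 2) := by
        apply mul_le_mul_of_nonneg_right <;> linarith
      exact le_of_mul_le_mul_left (by linarith) hM1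
    have := abs_le.1 h1
    have := abs_le.1 h2
    simp only
    linarith
  have hz : LipschitzWith 1 (fun _ : X => (0 : ℝ)) := (LipschitzWith.const 0).weaken zero_le_one
  haveI : Nonempty {f : X → ℝ // LipschitzWith 1 f} := ⟨⟨_, hz⟩⟩
  rw [abs_of_nonneg]
  · exact ciSup_le key
  · refine le_trans ?_ (le_ciSup ⟨ε, by rintro _ ⟨φ, rfl⟩; exact key φ⟩ ⟨_, hz⟩)
    simp

theorem aux_dKR_self {X : Type*} [MetricSpace X] [MeasurableSpace X] (μ : Measure X) :
    dKR μ μ = 0 := by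
  simp [dKR]

theorem aux_feat {X : Type*} [MetricSpace X] [CompactSpace X] [Nonempty X]
    [MeasurableSpace X] [BorelSpace X]
    {Hk : Type*} [NormedAddCommGroup Hk] [InnerProductSpace ℝ Hk]
    (Φ : ProbabilityMeasure X → Hk)
    (k : ProbabilityMeasure X → ProbabilityMeasure X → ℝ)
    (hkk : ∀ μ ν, k μ ν = ⟪Φ μ, Φ ν⟫)
    (L_k : ℝ)
    (hLipk : ∀ μ₁ μ₁' μ₂ μ₂' : ProbabilityMeasure X,
      |k μ₁ μ₁' - k μ₂ μ₂'| ≤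
        L_k * (dKR (μ₁ : Measure X) (μ₂ : Measure X) + dKR (μ₁' : Measure X) (μ₂' : Measure X)))
    (μ : ProbabilityMeasure X) :
    ∃ ξ : ∀ M : ℕ, Fin (M + 1) → X,
      Tendsto (fun M => Φ (empProb (ξ M))) atTop (𝓝 (Φ μ)) := by
  have h : ∀ M : ℕ, ∃ x : Fin (M + 1) → X, ∀ y : Fin (M + 1) → X,
      ‖Φ (empProb x) - Φ μ‖ ≤ ‖Φ (empProb y) - Φ μ‖ + 1 / ((M : ℝ) + 1) := by
    intro M
    have hne : (Set.range fun y : Fin (M + 1) → X => ‖Φ (empProb y) - Φ μ‖).Nonempty :=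
      Set.range_nonempty _
    obtain ⟨_, ⟨x, rfl⟩, hx⟩ := Real.lt_sInf_add_pos hne
      (show (0 : ℝ) < 1 / ((M : ℝ) + 1) by positivity)
    refine ⟨x, fun y => hx.le.trans ?_⟩
    gcongr
    exact csInf_le ⟨0, by rintro _ ⟨z, rfl⟩; exact norm_nonneg _⟩ ⟨y, rfl⟩
  choose ξ hξ using h
  refine ⟨ξ, ?_⟩
  rw [Metric.tendsto_atTop]
  intro ε hε
  have hδ : 0 < (ε / 2) ^ 2 / (2 * (|L_k| + 1)) / 2 := by positivity
  obtain ⟨M₀, hM₀⟩ := aux_dKR (μ : Measure X) _ hδ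
  obtain ⟨M₁, hM₁⟩ := exists_nat_one_div_lt (show 0 < ε / 2 by positivity)
  refine ⟨max M₀ M₁, fun M hM => ?_⟩
  obtain ⟨y, hy⟩ := hM₀ M (le_trans (le_max_left _ _) hM)
  set ν := empProb y with hν
  have hνm : (ν : Measure X) = empMeasure y := rfl
  set d := dKR (μ : Measure X) (empMeasure y) with hd
  have hLd : L_k * d ≤ (|L_k| + 1) * ((ε / 2) ^ 2 / (2 * (|L_k| + 1)) / 2) := by
    calc L_k * d ≤ |L_k * d| := le_abs_self _
      _ = |L_k| * |d| := abs_mul _ _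
      _ ≤ _ := mul_le_mul (by linarith) hy (abs_nonneg _) (by positivity)
  have hLd' : (|L_k| + 1) * ((ε / 2) ^ 2 / (2 * (|L_k| + 1)) / 2) = (ε / 2) ^ 2 / 4 := by
    have : |L_k| + 1 ≠ 0 := by positivity
    field_simp
    norm_num
  have k1 := hLipk μ μ ν μ
  have k2 := hLipk μ ν ν ν
  rw [aux_dKR_self, add_zero, hνm] at k1 k2
  have hn : ‖Φ ν - Φ μ‖ ^ 2 = (k μ μ - k ν μ) - (k μ ν - k ν ν) := by
    rw [norm_sub_sq_real, hkk, hkk, hkk, hkk, real_inner_self_eq_norm_sq,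
      real_inner_self_eq_norm_sq, real_inner_comm (Φ ν) (Φ μ)]
    ring
  have hlt : ‖Φ ν - Φ μ‖ < ε / 2 := by
    have := abs_le.1 k1
    have := abs_le.1 k2
    apply lt_of_pow_lt_pow_left₀ 2 (by positivity)
    nlinarith [mul_pos hε hε]
  rw [dist_eq_norm]
  have h3 : 1 / ((M : ℝ) + 1) ≤ 1 / ((M₁ : ℝ) + 1) := by
    apply one_div_le_one_div_of_le (by positivity)
    have : (M₁ : ℝ) ≤ M := by exact_mod_cast le_trans (le_max_right _ _) hM
    linarith
  have := hξ M y
  linarith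

/-- Recovery sequences (Γ-limsup): for every `f ∈ H_k` (represented by `g`)
there is a sequence `f_M ∈ H_{k_M}` converging to `f` in mean field with
`limsup ‖f_M‖_{k_M} ≤ ‖f‖ₖ`. -/
theorem mean_field_recovery_sequence
    {X : Type*} [MetricSpace X] [CompactSpace X] [Nonempty X]
    [MeasurableSpace X] [BorelSpace X]
    {HM : ℕ → Type*} [∀ M, NormedAddCommGroup (HM M)] [∀ M, InnerProductSpace ℝ (HM M)]
    [∀ M, CompleteSpace (HM M)]
    (ΦM : ∀ M : ℕ, (Fin (M + 1) → X) → HM M)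
    (kM : ∀ M : ℕ, (Fin (M + 1) → X) → (Fin (M + 1) → X) → ℝ)
    (hkM : ∀ M x x', kM M x x' = ⟪ΦM M x, ΦM M x'⟫)
    {Hk : Type*} [NormedAddCommGroup Hk] [InnerProductSpace ℝ Hk] [CompleteSpace Hk]
    (Φ : ProbabilityMeasure X → Hk)
    (k : ProbabilityMeasure X → ProbabilityMeasure X → ℝ)
    (hkk : ∀ μ ν, k μ ν = ⟪Φ μ, Φ ν⟫)
    (hdense : Dense (Submodule.span ℝ (Set.range Φ) : Set Hk))
    (C_k L_k : ℝ)
    (hbdM : ∀ M x x', |kM M x x'| ≤ C_k)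
    (hbdk : ∀ μ ν, |k μ ν| ≤ C_k)
    (hLipM : ∀ M (x₁ x₁' x₂ x₂' : Fin (M + 1) → X),
      |kM M x₁ x₁' - kM M x₂ x₂'| ≤
        L_k * (dKR (empMeasure x₁) (empMeasure x₂) + dKR (empMeasure x₁') (empMeasure x₂')))
    (hLipk : ∀ μ₁ μ₁' μ₂ μ₂' : ProbabilityMeasure X,
      |k μ₁ μ₁' - k μ₂ μ₂'| ≤
        L_k * (dKR (μ₁ : Measure X) (μ₂ : Measure X) + dKR (μ₁' : Measure X) (μ₂' : Measure X)))
    (hMF : ∀ ε : ℝ, 0 < ε → ∃ M₀ : ℕ, ∀ M ≥ M₀, ∀ x x' : Fin (M + 1) → X,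
      |kM M x x' - k (empProb x) (empProb x')| ≤ ε)
    (g : Hk) :
    ∃ fM : ∀ M, HM M,
      (∀ ε : ℝ, 0 < ε → ∃ M₀ : ℕ, ∀ M ≥ M₀, ∀ x : Fin (M + 1) → X,
        |⟪fM M, ΦM M x⟫ - ⟪g, Φ (empProb x)⟫| ≤ ε) ∧
      Filter.limsup (fun M => ‖fM M‖) Filter.atTop ≤ ‖g‖ := by
  classical
  have hC : 0 ≤ C_k := by
    let μ0 : ProbabilityMeasure X := empProb (M := 0) (fun _ => Classical.arbitrary X)
    exact (abs_nonneg _).trans (hbdk μ0 μ0)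
  have hΦ : ∀ μ, ‖Φ μ‖ ≤ C_k + 1 := by
    intro μ
    have := (le_abs_self _).trans (hbdk μ μ)
    rw [hkk, real_inner_self_eq_norm_sq] at this
    nlinarith [norm_nonneg (Φ μ)]
  choose ξ hξ using aux_feat Φ k hkk L_k hLipk
  -- statement on the span
  have hspan : ∀ g ∈ Submodule.span ℝ (Set.range Φ), ∀ ε : ℝ, 0 < ε → ∃ M₀ : ℕ, ∀ M ≥ M₀,
      ∃ f : HM M, (∀ x : Fin (M + 1) → X, |⟪f, ΦM M x⟫ - ⟪g, Φ (empProb x)⟫| ≤ ε) ∧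
        ‖f‖ ≤ ‖g‖ + ε := by
    intro g hg ε hε
    obtain ⟨c, rfl⟩ := (Finsupp.mem_span_range_iff_exists_finsupp).1 hg
    set s := c.support
    simp only [Finsupp.sum]
    set g := ∑ a ∈ s, c a • Φ a with hgdef
    let gM : ℕ → Hk := fun M => ∑ a ∈ s, c a • Φ (empProb (ξ a M))
    let f : ∀ M, HM M := fun M => ∑ a ∈ s, c a • ΦM M (ξ a M)
    have hgM : Tendsto gM atTop (𝓝 g) :=
      tendsto_finsetSum _ fun a _ => (hξ a).const_smul (c a)
    set S := ∑ a ∈ s, |c a| with hS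
    have hS0 : 0 ≤ S := Finset.sum_nonneg fun _ _ => abs_nonneg _
    have h1 : ∀ δ, 0 ≤ δ → ∀ M, (∀ x x' : Fin (M + 1) → X,
        |kM M x x' - k (empProb x) (empProb x')| ≤ δ) → ∀ x : Fin (M + 1) → X,
        |⟪f M, ΦM M x⟫ - ⟪gM M, Φ (empProb x)⟫| ≤ S * δ := by
      intro δ _ M h x
      simp only [f, gM, sum_inner, real_inner_smul_left, ← hkM, ← hkk]
      rw [← Finset.sum_sub_distrib, hS, Finset.sum_mul]
      refine (Finset.abs_sum_le_sum_abs _ _).trans (Finset.sum_le_sum fun a _ => ?_)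
      rw [← mul_sub, abs_mul]
      exact mul_le_mul_of_nonneg_left (h _ _) (abs_nonneg _)
    have h2 : ∀ δ, 0 ≤ δ → ∀ M, (∀ x x' : Fin (M + 1) → X,
        |kM M x x' - k (empProb x) (empProb x')| ≤ δ) →
        |‖f M‖ ^ 2 - ‖gM M‖ ^ 2| ≤ S * (S * δ) := by
      intro δ hδ M h
      have e1 : ‖f M‖ ^ 2 = ∑ a ∈ s, c a * ⟪f M, ΦM M (ξ a M)⟫ := by
        rw [← real_inner_self_eq_norm_sq]
        conv_lhs => rw [show f M = ∑ a ∈ s, c a • ΦM M (ξ a M) from rfl]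
        rw [inner_sum]
        simp only [real_inner_smul_right]
        rfl
      have e2 : ‖gM M‖ ^ 2 = ∑ a ∈ s, c a * ⟪gM M, Φ (empProb (ξ a M))⟫ := by
        rw [← real_inner_self_eq_norm_sq]
        conv_lhs => rw [show gM M = ∑ a ∈ s, c a • Φ (empProb (ξ a M)) from rfl]
        rw [inner_sum]
        simp only [real_inner_smul_right]
        rfl
      rw [e1, e2, ← Finset.sum_sub_distrib]
      conv_rhs => rw [hS, Finset.sum_mul]
      refine (Finset.abs_sum_le_sum_abs _ _).trans (Finset.sum_le_sum fun a _ => ?_)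
      rw [← mul_sub, abs_mul]
      exact mul_le_mul_of_nonneg_left (h1 δ hδ M h _) (abs_nonneg _)
    -- choose tolerances
    obtain ⟨δ, hδ, hδ1, hδ2⟩ : ∃ δ : ℝ, 0 < δ ∧ S * δ ≤ ε / 2 ∧ S * (S * δ) ≤ (ε / 2) ^ 2 := by
      have t1 : Tendsto (fun δ : ℝ => S * δ) (𝓝[>] 0) (𝓝 0) := by
        have : Continuous (fun δ : ℝ => S * δ) := by fun_prop
        simpa using (this.tendsto 0).mono_left nhdsWithin_le_nhds
      have t2 : Tendsto (fun δ : ℝ => S * (S * δ)) (𝓝[>] 0) (𝓝 0) := by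
        have : Continuous (fun δ : ℝ => S * (S * δ)) := by fun_prop
        simpa using (this.tendsto 0).mono_left nhdsWithin_le_nhds
      have := ((t1.eventually_le_const (show 0 < ε / 2 by positivity)).and
        ((t2.eventually_le_const (show 0 < (ε / 2) ^ 2 by positivity)).and
          self_mem_nhdsWithin)).exists
      obtain ⟨δ, a, b, h⟩ := this
      exact ⟨δ, h, a, b⟩
    obtain ⟨M₀, hM₀⟩ := hMF δ hδ
    obtain ⟨M₁, hM₁⟩ := Metric.tendsto_atTop.1 hgM (min (ε / 2) (ε / 2 / (C_k + 1)))
      (by positivity)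
    refine ⟨max M₀ M₁, fun M hM => ⟨f M, ?_, ?_⟩⟩
    · intro x
      have a1 := h1 δ hδ.le M (hM₀ M (le_trans (le_max_left _ _) hM)) x
      have a2 := hM₁ M (le_trans (le_max_right _ _) hM)
      rw [dist_eq_norm] at a2
      have a3 : |⟪gM M, Φ (empProb x)⟫ - ⟪g, Φ (empProb x)⟫| ≤ ε / 2 := by
        rw [← inner_sub_left]
        calc _ ≤ ‖gM M - g‖ * ‖Φ (empProb x)‖ := abs_real_inner_le_norm _ _
          _ ≤ (ε / 2 / (C_k + 1)) * (C_k + 1) :=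
            mul_le_mul (a2.le.trans (min_le_right _ _)) (hΦ _) (norm_nonneg _) (by positivity)
          _ = ε / 2 := by field_simp
      have := abs_le.1 a1
      have := abs_le.1 a3
      rw [abs_le]; constructor <;> linarith
    · have a1 := h2 δ hδ.le M (hM₀ M (le_trans (le_max_left _ _) hM))
      have a2 := (hM₁ M (le_trans (le_max_right _ _) hM)).le.trans (min_le_left _ _)
      rw [dist_eq_norm] at a2
      have a3 : ‖gM M‖ ≤ ‖g‖ + ε / 2 := by
        have := norm_sub_norm_le (gM M) g
        linarith
      have a4 : ‖f M‖ ≤ ‖gM M‖ + ε / 2 := by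
        have := abs_le.1 a1
        apply le_of_pow_le_pow_left₀ two_ne_zero (by positivity)
        nlinarith [norm_nonneg (gM M)]
      linarith
  have hall : ∀ ε : ℝ, 0 < ε → ∃ M₀ : ℕ, ∀ M ≥ M₀,
      ∃ f : HM M, (∀ x : Fin (M + 1) → X, |⟪f, ΦM M x⟫ - ⟪g, Φ (empProb x)⟫| ≤ ε) ∧
        ‖f‖ ≤ ‖g‖ + ε := by
    intro ε hε
    obtain ⟨g', hg', hd⟩ := hdense.exists_dist_lt g
      (show 0 < min (ε / 2) (ε / 2 / (C_k + 1)) by positivity)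
    obtain ⟨M₀, hM₀⟩ := hspan g' hg' (ε / 2) (by positivity)
    rw [dist_comm, dist_eq_norm] at hd
    refine ⟨M₀, fun M hM => ?_⟩
    obtain ⟨f, hf1, hf2⟩ := hM₀ M hM
    refine ⟨f, fun x => ?_, ?_⟩
    · have a3 : |⟪g', Φ (empProb x)⟫ - ⟪g, Φ (empProb x)⟫| ≤ ε / 2 := by
        rw [← inner_sub_left]
        calc _ ≤ ‖g' - g‖ * ‖Φ (empProb x)‖ := abs_real_inner_le_norm _ _
          _ ≤ (ε / 2 / (C_k + 1)) * (C_k + 1) :=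
            mul_le_mul (hd.le.trans (min_le_right _ _)) (hΦ _) (norm_nonneg _) (by positivity)
          _ = ε / 2 := by field_simp
      have := abs_le.1 (hf1 x)
      have := abs_le.1 a3
      rw [abs_le]; constructor <;> linarith
    · have := norm_sub_norm_le g' g
      have := hd.le.trans (min_le_left _ _)
      linarith
  -- diagonal argument
  let Q : ∀ M : ℕ, ℕ → HM M → Prop := fun M n f =>
    (∀ x : Fin (M + 1) → X, |⟪f, ΦM M x⟫ - ⟪g, Φ (empProb x)⟫| ≤ 1 / ((n : ℝ) + 1)) ∧
      ‖f‖ ≤ ‖g‖ + 1 / ((n : ℝ) + 1)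
  let N : ℕ → ℕ := fun M => Nat.findGreatest (fun n => ∃ f, Q M n f) M
  let fM : ∀ M, HM M := fun M => if h : ∃ f, Q M (N M) f then h.choose else 0
  have hfin : ∀ ε : ℝ, 0 < ε → ∃ M₀ : ℕ, ∀ M ≥ M₀,
      (∀ x : Fin (M + 1) → X, |⟪fM M, ΦM M x⟫ - ⟪g, Φ (empProb x)⟫| ≤ ε) ∧
        ‖fM M‖ ≤ ‖g‖ + ε := by
    intro ε hε
    obtain ⟨n, hn⟩ := exists_nat_one_div_lt hε
    obtain ⟨M₀, hM₀⟩ := hall (1 / ((n : ℝ) + 1)) (by positivity)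
    refine ⟨max M₀ n, fun M hM => ?_⟩
    have hQ : ∃ f, Q M n f := hM₀ M (le_trans (le_max_left _ _) hM)
    have hnM : n ≤ M := le_trans (le_max_right _ _) hM
    have hN : ∃ f, Q M (N M) f := Nat.findGreatest_spec (P := fun n => ∃ f, Q M n f) hnM hQ
    have hnN : n ≤ N M := Nat.le_findGreatest hnM hQ
    have hf : Q M (N M) (fM M) := by
      simp only [fM, dif_pos hN]
      exact hN.choose_spec
    have hle : 1 / ((N M : ℝ) + 1) ≤ ε := by
      refine le_trans ?_ hn.le
      apply one_div_le_one_div_of_le (by positivity)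
      have : (n : ℝ) ≤ N M := by exact_mod_cast hnN
      linarith
    exact ⟨fun x => (hf.1 x).trans hle, hf.2.trans (by linarith)⟩
  refine ⟨fM, fun ε hε => ?_, ?_⟩
  · obtain ⟨M₀, h⟩ := hfin ε hε
    exact ⟨M₀, fun M hM => (h M hM).1⟩
  · refine le_of_forall_pos_le_add fun ε hε => ?_
    obtain ⟨M₀, h⟩ := hfin ε hε
    refine limsup_le_of_le ?_ ?_
    · exact IsCoboundedUnder.of_frequently_ge (a := 0) (Frequently.of_forall fun M => norm_nonneg _)
    · filter_upwards [eventually_ge_atTop M₀] with M hM using (h M hM).2
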